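/- Let D ≥ 2. Every pair of polynomial vector fields (P, P̄) satisfying the system (S): ∂_μ P_ν = ∂_ν P̄_μ for all μ, ν and Σ_μ ∂^μ P_μ = Σ_μ ∂^μ P̄_μ, can be written in exactly one way as P_μ = ∂_μ R + Σ_ν ξ_{μν} x^ν + c_μ and P̄_μ = ∂_μ R − Σ_ν ξ_{μν} x^ν − c_μ, where R is a polynomial with zero constant term, ξ = (ξ_{μν}) is an antisymmetric D×D complex matrix, and c ∈ ℂ^D. In particular the pairs (ξ·x + c, −ξ·x − c) with ξ antisymmetric represent the nontrivial solutions of (S). -/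

import Mathlib

open MvPolynomial

/-- The partial derivative `∂_μ` on `ℂ[x^0, …, x^{D-1}]`, as a linear map. -/
noncomputable def pd (D : ℕ) (μ : Fin D) :
    MvPolynomial (Fin D) ℂ →ₗ[ℂ] MvPolynomial (Fin D) ℂ :=
  (pderiv μ).toLinearMap

/-- The raised-index derivative `∂^μ = η^{μμ} ∂_μ` for the Minkowski metric
`η = diag(-1, 1, …, 1)` (no sum over `μ`). -/
noncomputable def pdU (D : ℕ) (μ : Fin D) :
    MvPolynomial (Fin D) ℂ →ₗ[ℂ] MvPolynomial (Fin D) ℂ :=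
  (if (μ : ℕ) = 0 then (-1 : ℂ) else 1) • pd D μ

/-!
Taking half the sum and half the difference, `P = S + A` and `Pb = S - A`, the first family of
equations says that `S` is closed, `∂_i S_j = ∂_j S_i`, and that `A` is a Killing field,
`∂_i A_j = -∂_j A_i`.

A closed field has a potential (Poincaré). Let `E = ∑ x_i ∂_i`, which multiplies a monomial by its
degree. A polynomial `r` with `E r = ∑ x_j S_j` exists because the right side has no constant term,
and `(E + 1) ∂_i r = ∂_i E r = S_i + ∑ x_j ∂_i S_j = S_i + ∑ x_j ∂_j S_i = (E + 1) S_i`; as `E + 1`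
is injective, `∂_i r = S_i`.

For a Killing field, `∂_i ∂_j A_k` is symmetric in `i, j` and antisymmetric in `j, k`, hence zero,
so each `A_k` is affine and its coefficients are read off from `A_k` and `∂_j A_k` at the origin.
-/

section PartialDerivatives

variable {σ R : Type*} [CommSemiring R]

theorem pderiv_comm (i j : σ) (p : MvPolynomial σ R) :
    pderiv i (pderiv j p) = pderiv j (pderiv i p) := by
  classical
  ext m
  rcases eq_or_ne i j with rfl | hij
  · rfl
  · simp only [coeff_pderiv, add_right_comm m (Finsupp.single i 1), Finsupp.add_apply,
      Finsupp.single_eq_of_ne hij, Finsupp.single_eq_of_ne hij.symm, add_zero]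
    ring

theorem eq_of_pderiv_eq [IsAddTorsionFree R] {p q : MvPolynomial σ R}
    (h_const : coeff 0 p = coeff 0 q) (h_pderiv : ∀ i, pderiv i p = pderiv i q) : p = q := by
  ext m
  rcases eq_or_ne m 0 with rfl | hm
  · exact h_const
  · obtain ⟨i, hi⟩ := Finsupp.ne_iff.mp hm
    have hle : Finsupp.single i 1 ≤ m :=
      Finsupp.single_le_iff.mpr (Nat.one_le_iff_ne_zero.mpr hi)
    have h_coeff := congrArg (coeff (m - Finsupp.single i 1)) (h_pderiv i)
    simp only [coeff_pderiv, tsub_add_cancel_of_le hle, ← Nat.cast_add_one, mul_comm (coeff m _),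
      ← nsmul_eq_mul] at h_coeff
    exact nsmul_right_injective (Nat.succ_ne_zero _) h_coeff

end PartialDerivatives

section EulerOperator

variable {σ R : Type*} [Fintype σ] [CommSemiring R]

/-- The Euler operator `∑ i, x_i ∂_i`, which multiplies a monomial by its degree; inverting it on
polynomials without constant term produces the potentials of closed fields. -/
noncomputable def eulerOperator : MvPolynomial σ R →ₗ[R] MvPolynomial σ R :=
  ∑ i, LinearMap.mulLeft R (X i) ∘ₗ (pderiv i).toLinearMap

theorem eulerOperator_apply (p : MvPolynomial σ R) :
    eulerOperator p = ∑ i, X i * pderiv i p := by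
  simp [eulerOperator]

theorem eulerOperator_monomial (m : σ →₀ ℕ) (a : R) :
    eulerOperator (monomial m a) = m.degree • monomial m a := by
  rw [eulerOperator_apply, (isHomogeneous_monomial a rfl).sum_X_mul_pderiv]

theorem coeff_eulerOperator (m : σ →₀ ℕ) (p : MvPolynomial σ R) :
    coeff m (eulerOperator p) = m.degree • coeff m p := by
  classical
  induction p using MvPolynomial.induction_on' with
  | monomial n a =>
    rw [eulerOperator_monomial, coeff_smul, coeff_monomial]
    split_ifs with h
    · rw [h]
    · simp only [smul_zero]
  | add p q hp hq => rw [map_add, coeff_add, hp, hq, coeff_add, smul_add]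

theorem pderiv_eulerOperator (i : σ) (p : MvPolynomial σ R) :
    pderiv i (eulerOperator p) = eulerOperator (pderiv i p) + pderiv i p := by
  ext m
  simp only [coeff_add, coeff_pderiv, coeff_eulerOperator, map_add, Finsupp.degree_single,
    add_smul, one_smul]
  rw [add_mul, smul_mul_assoc]

theorem eulerOperator_add_self_injective [IsAddTorsionFree R] :
    Function.Injective fun p : MvPolynomial σ R => eulerOperator p + p := by
  intro p q h
  ext m
  have h_coeff := congrArg (coeff m) h
  simp only [coeff_add, coeff_eulerOperator, ← succ_nsmul] at h_coeff
  exact nsmul_right_injective (Nat.succ_ne_zero _) h_coeff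

theorem exists_eulerOperator_eq [Algebra ℚ R] {p : MvPolynomial σ R} (hp : coeff 0 p = 0) :
    ∃ r, coeff 0 r = 0 ∧ eulerOperator r = p := by
  classical
  refine ⟨∑ m ∈ p.support, monomial m ((m.degree : ℚ)⁻¹ • coeff m p), ?_, ?_⟩
  · simp [coeff_sum, coeff_monomial, hp]
  · have h_term : ∀ m ∈ p.support,
        eulerOperator (monomial m ((m.degree : ℚ)⁻¹ • coeff m p)) = monomial m (coeff m p) := by
      intro m hm
      have hm0 : m ≠ 0 := by
        rintro rfl
        exact mem_support_iff.mp hm hp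
      have h_degree : (m.degree : ℚ) ≠ 0 :=
        Nat.cast_ne_zero.mpr (mt (Finsupp.degree_eq_zero_iff m).mp hm0)
      rw [eulerOperator_monomial, ← map_nsmul, ← Nat.cast_smul_eq_nsmul ℚ,
        smul_inv_smul₀ h_degree]
    rw [map_sum, Finset.sum_congr rfl h_term, support_sum_monomial_coeff]

theorem pderiv_sum_X_mul_of_closed {S : σ → MvPolynomial σ R}
    (hS : ∀ i j, pderiv i (S j) = pderiv j (S i)) (i : σ) :
    pderiv i (∑ j, X j * S j) = eulerOperator (S i) + S i := by
  classical
  simp [eulerOperator_apply, pderiv_X, Pi.single_apply, Finset.sum_add_distrib, hS i, add_comm]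

end EulerOperator

theorem existsUnique_potential {σ R : Type*} [Finite σ] [CommRing R] [Algebra ℚ R]
    {S : σ → MvPolynomial σ R} (hS : ∀ i j, pderiv i (S j) = pderiv j (S i)) :
    ∃! r : MvPolynomial σ R, coeff 0 r = 0 ∧ ∀ i, S i = pderiv i r := by
  have := Fintype.ofFinite σ
  have : IsAddTorsionFree R := .of_module_rat R
  have h_const : coeff 0 (∑ j, X j * S j) = 0 := by simp [← constantCoeff_eq]
  obtain ⟨r, hr_const, hr⟩ := exists_eulerOperator_eq h_const
  have hr_pderiv (i : σ) : S i = pderiv i r := by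
    apply eulerOperator_add_self_injective
    dsimp only
    rw [← pderiv_sum_X_mul_of_closed hS, ← hr, pderiv_eulerOperator]
  refine ⟨r, ⟨hr_const, hr_pderiv⟩, fun r' ⟨hr'_const, hr'_pderiv⟩ => ?_⟩
  exact eq_of_pderiv_eq (hr'_const.trans hr_const.symm) fun i =>
    (hr'_pderiv i).symm.trans (hr_pderiv i)

section AffinePolynomials

variable {σ R : Type*} [Fintype σ] [CommSemiring R]

theorem pderiv_affine (a : σ → R) (b : R) (i : σ) :
    pderiv i ((∑ j, C (a j) * X j) + C b) = C (a i) := by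
  classical
  simp [pderiv_X, Pi.single_apply]

theorem coeff_zero_affine (a : σ → R) (b : R) :
    coeff 0 ((∑ j, C (a j) * X j) + C b) = b := by
  simp [coeff_sum]

theorem eq_affine_of_pderiv_pderiv_eq_zero [IsAddTorsionFree R] {p : MvPolynomial σ R}
    (hp : ∀ i j, pderiv i (pderiv j p) = 0) :
    p = (∑ j, C (coeff 0 (pderiv j p)) * X j) + C (coeff 0 p) := by
  refine eq_of_pderiv_eq (coeff_zero_affine _ _).symm fun j => ?_
  rw [pderiv_affine fun j => coeff 0 (pderiv j p)]
  exact eq_of_pderiv_eq (coeff_zero_C _).symm fun i => by rw [hp, pderiv_C]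

end AffinePolynomials

section KillingFields

theorem eq_zero_of_symm_of_antisymm {ι M : Type*} [AddCommGroup M] [IsAddTorsionFree M]
    {T : ι → ι → ι → M} (h_symm : ∀ i j k, T i j k = T j i k)
    (h_antisymm : ∀ i j k, T i j k = -T i k j) (i j k : ι) : T i j k = 0 := by
  refine self_eq_neg.mp ?_
  calc T i j k = -T i k j := h_antisymm i j k
    _ = -T k i j := by rw [h_symm i k j]
    _ = T k j i := by rw [h_antisymm k i j, neg_neg]
    _ = T j k i := h_symm k j i
    _ = -T j i k := h_antisymm j k i
    _ = -T i j k := by rw [h_symm j i k]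

variable {σ R : Type*} [CommRing R] [IsAddTorsionFree R]

theorem pderiv_pderiv_eq_zero_of_killing {A : σ → MvPolynomial σ R}
    (hA : ∀ i j, pderiv i (A j) = -pderiv j (A i)) (i j k : σ) :
    pderiv i (pderiv j (A k)) = 0 := by
  ext m
  refine eq_zero_of_symm_of_antisymm (T := fun i j k => coeff m (pderiv i (pderiv j (A k))))
    (fun i j k => ?_) (fun i j k => ?_) i j k
  · rw [pderiv_comm]
  · rw [hA, map_neg, coeff_neg]

theorem existsUnique_affine_of_killing [Fintype σ] {A : σ → MvPolynomial σ R}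
    (hA : ∀ i j, pderiv i (A j) = -pderiv j (A i)) :
    ∃! t : Matrix σ σ R × (σ → R), (∀ i j, t.1 i j = -t.1 j i) ∧
      ∀ i, A i = (∑ j, C (t.1 i j) * X j) + C (t.2 i) := by
  refine ⟨(Matrix.of fun i j => coeff 0 (pderiv j (A i)), fun i => coeff 0 (A i)),
    ⟨fun i j => ?_, fun i => ?_⟩, ?_⟩
  · simp only [Matrix.of_apply]
    rw [hA, coeff_neg]
  · exact eq_affine_of_pderiv_pderiv_eq_zero fun j k => pderiv_pderiv_eq_zero_of_killing hA j k i
  · rintro ⟨ξ, c⟩ ⟨-, hξc⟩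
    refine Prod.ext (Matrix.ext fun i j => ?_) (funext fun i => ?_)
    · simp only [Matrix.of_apply]
      rw [hξc, pderiv_affine (ξ i), coeff_zero_C]
    · dsimp only
      rw [hξc, coeff_zero_affine]

end KillingFields

theorem eq_add_and_eq_sub_iff {M : Type*} [AddCommGroup M] [Module ℚ M] {x y s a : M} :
    (x = s + a ∧ y = s - a) ↔ (2⁻¹ : ℚ) • (x + y) = s ∧ (2⁻¹ : ℚ) • (x - y) = a := by
  constructor
  · rintro ⟨rfl, rfl⟩
    constructor <;> module
  · rintro ⟨rfl, rfl⟩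
    constructor <;> module

theorem solutions_unique_decomposition_general {σ R : Type*} [Fintype σ] [CommRing R] [Algebra ℚ R]
    (P Pb : σ → MvPolynomial σ R) (h : ∀ i j, pderiv i (P j) = pderiv j (Pb i)) :
    ∃! t : MvPolynomial σ R × Matrix σ σ R × (σ → R),
      t.1.coeff 0 = 0 ∧
      (∀ i j, t.2.1 i j = -t.2.1 j i) ∧
      (∀ i, P i = pderiv i t.1 + (∑ j, C (t.2.1 i j) * X j) + C (t.2.2 i)) ∧
      (∀ i, Pb i = pderiv i t.1 - (∑ j, C (t.2.1 i j) * X j) - C (t.2.2 i)) := by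
  have : IsAddTorsionFree R := .of_module_rat R
  have h_closed (i j : σ) : pderiv i ((2⁻¹ : ℚ) • (P j + Pb j)) =
      pderiv j ((2⁻¹ : ℚ) • (P i + Pb i)) := by
    simp only [map_rat_smul, map_add, h i j, ← h j i, add_comm]
  have h_killing (i j : σ) : pderiv i ((2⁻¹ : ℚ) • (P j - Pb j)) =
      -pderiv j ((2⁻¹ : ℚ) • (P i - Pb i)) := by
    simp only [map_rat_smul, map_sub, h i j, ← h j i, ← smul_neg, neg_sub]
  have h_split (r : MvPolynomial σ R) (L : σ → MvPolynomial σ R) :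
      ((∀ i, P i = pderiv i r + L i) ∧ ∀ i, Pb i = pderiv i r - L i) ↔
        (∀ i, (2⁻¹ : ℚ) • (P i + Pb i) = pderiv i r) ∧ ∀ i, (2⁻¹ : ℚ) • (P i - Pb i) = L i := by
    simp only [← forall_and, eq_add_and_eq_sub_iff]
  obtain ⟨r, ⟨hr_const, hr⟩, hr_unique⟩ := existsUnique_potential h_closed
  obtain ⟨⟨ξ, c⟩, ⟨hξ, hξc⟩, hξc_unique⟩ := existsUnique_affine_of_killing h_killing
  simp only [add_assoc, sub_sub, h_split]
  refine ⟨(r, ξ, c), ⟨hr_const, hξ, hr, hξc⟩, ?_⟩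
  rintro ⟨r', t'⟩ ⟨hr'_const, hξ', hr', hξc'⟩
  exact Prod.ext (hr_unique r' ⟨hr'_const, hr'⟩) (hξc_unique t' ⟨hξ', hξc'⟩)

/-- Structure of the solutions of the system (S): every solution `(P, P̄)` of
`∂_μ P_ν = ∂_ν P̄_μ`, `Σ_μ ∂^μ P_μ = Σ_μ ∂^μ P̄_μ` decomposes uniquely as
`P_μ = ∂_μ R + Σ_ν ξ_{μν} x^ν + c_μ`, `P̄_μ = ∂_μ R − Σ_ν ξ_{μν} x^ν − c_μ`
with `R` a polynomial with zero constant term, `ξ` an antisymmetric complex `D×D` matrix and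
`c ∈ ℂ^D`. -/
theorem solutions_unique_decomposition (D : ℕ) (hD : 2 ≤ D)
    (P Pb : Fin D → MvPolynomial (Fin D) ℂ)
    (hS1 : ∀ μ ν, pd D μ (P ν) = pd D ν (Pb μ))
    (hS2 : (∑ μ, pdU D μ (P μ)) = ∑ μ, pdU D μ (Pb μ)) :
    ∃! t : MvPolynomial (Fin D) ℂ × Matrix (Fin D) (Fin D) ℂ × (Fin D → ℂ),
      t.1.coeff 0 = 0 ∧
      (∀ μ ν, t.2.1 μ ν = - t.2.1 ν μ) ∧
      (∀ μ, P μ = pd D μ t.1 + (∑ ν, MvPolynomial.C (t.2.1 μ ν) * X ν)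
        + MvPolynomial.C (t.2.2 μ)) ∧
      (∀ μ, Pb μ = pd D μ t.1 - (∑ ν, MvPolynomial.C (t.2.1 μ ν) * X ν)
        - MvPolynomial.C (t.2.2 μ)) :=
  solutions_unique_decomposition_general P Pb hS1
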